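/- arXiv:1706.07175 — 2 statements merged into one kernel-verified Lean document; each statement's English description precedes it below -/
import Mathlib

section
/- Let E ⊂ ℂ^N be a nonempty compact set, μ a Borel probability measure with support contained in E, and B₁ > 0, β₁ ≥ 0 constants such that ‖P‖_E ≤ B₁ (deg P)^{β₁} ‖P‖_{L²(μ)} for every polynomial P with deg P ≥ 1. Then for every real s ≥ 1 and every polynomial P with deg P ≥ 1, ‖P‖_E ≤ B₁^{2/s} · ⌈s⌉^{2β₁/s} · (deg P)^{2β₁/s} · ‖P‖_{L^s(μ)}, where ⌈s⌉ is the smallest integer ≥ s. In particular, each norm ‖P‖_{L^s(μ)} + ‖P‖_E (s ≥ 1) is E-admissible. -/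
open MvPolynomial MeasureTheory

/-- The supremum norm `‖P‖_E = sup_{z ∈ E} |P(z)|` on polynomials in `N` variables. -/
noncomputable def supNorm {N : ℕ} (E : Set (Fin N → ℂ)) (P : MvPolynomial (Fin N) ℂ) : ℝ :=
  ⨆ z : E, ‖MvPolynomial.eval (z : Fin N → ℂ) P‖

/-- The `L^s(μ)` norm `(∫ |P|^s dμ)^{1/s}` of a polynomial, for a real exponent `s`. -/
noncomputable def lpNorm {N : ℕ} (μ : Measure (Fin N → ℂ)) (s : ℝ)
    (P : MvPolynomial (Fin N) ℂ) : ℝ :=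
  (∫ z, ‖MvPolynomial.eval z P‖ ^ s ∂μ) ^ (1 / s)

/-!
If `M = ‖P‖_E` and `s ≤ p`, then `|P| ≤ M` on `E` gives `∫ |P|^p ≤ M^(p - s) ∫ |P|^s`, so a
bound `M ≤ C ‖P‖_{L^p}` improves itself to `M ≤ C^(p/s) ‖P‖_{L^s}` once powers of `M` are
cancelled. When only an `L^q` bound with `q < s` is available, apply it to a power `P ^ k` with
`q k ≥ s`: since `‖P ^ k‖_E = ‖P‖_E ^ k` and `‖P ^ k‖_{L^q} = ‖P‖_{L^{qk}} ^ k`, its `k`-th root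
bounds `M` by the `L^{qk}` norm.
-/

section BoundedFunctions

variable {α F : Type*} [MeasurableSpace α] [SeminormedAddCommGroup F] {μ : Measure α} {f : α → F}
  {M p q : ℝ}

lemma integrable_norm_rpow_of_ae_norm_le [IsFiniteMeasure μ] (hf : AEStronglyMeasurable f μ)
    (hM : ∀ᵐ x ∂μ, ‖f x‖ ≤ M) (hp : 0 ≤ p) : Integrable (fun x ↦ ‖f x‖ ^ p) μ := by
  refine .of_bound ((Real.continuous_rpow_const hp).comp_aestronglyMeasurable hf.norm) (M ^ p) ?_
  filter_upwards [hM] with x hx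
  rw [Real.norm_of_nonneg (by positivity)]
  gcongr

lemma integral_norm_rpow_le_mul_integral (hM : ∀ᵐ x ∂μ, ‖f x‖ ≤ M) (hp : 0 ≤ p) (hpq : p ≤ q)
    (hf : Integrable (fun x ↦ ‖f x‖ ^ p) μ) :
    ∫ x, ‖f x‖ ^ q ∂μ ≤ M ^ (q - p) * ∫ x, ‖f x‖ ^ p ∂μ := by
  rw [← integral_const_mul]
  refine integral_mono_of_nonneg (.of_forall fun x ↦ by positivity) (hf.const_mul _) ?_
  filter_upwards [hM] with x hx
  calc ‖f x‖ ^ q = ‖f x‖ ^ (q - p) * ‖f x‖ ^ p := by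
        rw [← Real.rpow_add_of_nonneg (norm_nonneg _) (sub_nonneg.2 hpq) hp, sub_add_cancel]
    _ ≤ M ^ (q - p) * ‖f x‖ ^ p := by
        have : 0 ≤ q - p := sub_nonneg.2 hpq
        gcongr

end BoundedFunctions

lemma totalDegree_pow_eq {σ R : Type*} [CommSemiring R] [NoZeroDivisors R]
    (P : MvPolynomial σ R) (k : ℕ) : (P ^ k).totalDegree = k * P.totalDegree := by
  rcases eq_or_ne P 0 with rfl | hP
  · rcases k.eq_zero_or_pos with rfl | hk
    · simp
    · simp [zero_pow hk.ne']
  induction k with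
  | zero => simp
  | succ k ih => rw [pow_succ, totalDegree_mul_of_isDomain (pow_ne_zero k hP) hP, ih, add_one_mul]

section PolynomialNorms

variable {N : ℕ} {E : Set (Fin N → ℂ)} {μ : Measure (Fin N → ℂ)} {P : MvPolynomial (Fin N) ℂ}
  {C p q : ℝ} {k : ℕ}

lemma supNorm_nonneg : 0 ≤ supNorm E P :=
  Real.iSup_nonneg fun _ ↦ norm_nonneg _

lemma supNorm_pow (hne : E.Nonempty) (P : MvPolynomial (Fin N) ℂ) (k : ℕ) :
    supNorm E (P ^ k) = supNorm E P ^ k := by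
  have : Nonempty E := hne.to_subtype
  simp only [supNorm, map_pow, norm_pow]
  exact (Real.iSup_pow (fun _ ↦ norm_nonneg _) k).symm

lemma norm_eval_le_supNorm (hE : Bornology.IsBounded E) (P : MvPolynomial (Fin N) ℂ)
    {z : Fin N → ℂ} (hz : z ∈ E) : ‖eval z P‖ ≤ supNorm E P := by
  have hbdd : BddAbove ((fun w ↦ ‖eval w P‖) '' E) :=
    (hE.isCompact_closure.bddAbove_image P.continuous_eval.norm.continuousOn).mono
      (Set.image_mono subset_closure)
  rw [Set.image_eq_range] at hbdd
  exact le_ciSup hbdd ⟨z, hz⟩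

lemma ae_norm_eval_le_supNorm (hE : Bornology.IsBounded E) (hμ : μ Eᶜ = 0)
    (P : MvPolynomial (Fin N) ℂ) : ∀ᵐ z ∂μ, ‖eval z P‖ ≤ supNorm E P := by
  have hmem : ∀ᵐ z ∂μ, z ∈ E := hμ
  exact hmem.mono fun _ hz ↦ norm_eval_le_supNorm hE P hz

lemma lpNorm_nonneg : 0 ≤ lpNorm μ p P :=
  Real.rpow_nonneg (integral_nonneg fun _ ↦ by positivity) _

lemma lpNorm_rpow_self (hp : p ≠ 0) (P : MvPolynomial (Fin N) ℂ) :
    lpNorm μ p P ^ p = ∫ z, ‖eval z P‖ ^ p ∂μ := by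
  rw [_root_.lpNorm, one_div, Real.rpow_inv_rpow (integral_nonneg fun _ ↦ by positivity) hp]

lemma lpNorm_pow (hk : k ≠ 0) (q : ℝ) (P : MvPolynomial (Fin N) ℂ) :
    lpNorm μ q (P ^ k) = lpNorm μ (q * k) P ^ k := by
  have hint : ∫ z, ‖eval z (P ^ k)‖ ^ q ∂μ = ∫ z, ‖eval z P‖ ^ (q * k) ∂μ := by
    simp only [map_pow, norm_pow, mul_comm q, Real.rpow_natCast_mul (norm_nonneg _)]
  have hexp : 1 / q = 1 / (q * k) * k := by field_simp
  rw [_root_.lpNorm, _root_.lpNorm, hint, hexp,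
    Real.rpow_mul_natCast (integral_nonneg fun _ ↦ by positivity)]

lemma lpNorm_rpow_le_supNorm_rpow_mul [IsFiniteMeasure μ] (hE : Bornology.IsBounded E)
    (hμ : μ Eᶜ = 0) (hp : 0 < p) (hpq : p ≤ q) (P : MvPolynomial (Fin N) ℂ) :
    lpNorm μ q P ^ q ≤ supNorm E P ^ (q - p) * lpNorm μ p P ^ p := by
  rw [lpNorm_rpow_self hp.ne', lpNorm_rpow_self (hp.trans_le hpq).ne']
  have hM := ae_norm_eval_le_supNorm hE hμ P
  exact integral_norm_rpow_le_mul_integral hM hp.le hpq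
    (integrable_norm_rpow_of_ae_norm_le P.continuous_eval.aestronglyMeasurable hM hp.le)

lemma lpNorm_le_measureReal_rpow_mul_supNorm [IsFiniteMeasure μ] (hE : Bornology.IsBounded E)
    (hμ : μ Eᶜ = 0) (hp : 0 < p) (P : MvPolynomial (Fin N) ℂ) :
    lpNorm μ p P ≤ μ.real Set.univ ^ (1 / p) * supNorm E P := by
  have hint : ∫ z, ‖eval z P‖ ^ p ∂μ ≤ μ.real Set.univ * supNorm E P ^ p := by
    -- the interpolation inequality at the lower exponent `0`, where `∫ ‖P‖ ^ 0 = μ(ℂ^N)`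
    simpa [mul_comm] using integral_norm_rpow_le_mul_integral
      (ae_norm_eval_le_supNorm hE hμ P) le_rfl hp.le (by simp)
  calc lpNorm μ p P ≤ (μ.real Set.univ * supNorm E P ^ p) ^ (1 / p) :=
        Real.rpow_le_rpow (integral_nonneg fun _ ↦ by positivity) hint (by positivity)
    _ = μ.real Set.univ ^ (1 / p) * supNorm E P := by
        rw [Real.mul_rpow measureReal_nonneg (Real.rpow_nonneg supNorm_nonneg _), one_div,
          Real.rpow_rpow_inv supNorm_nonneg hp.ne']

lemma supNorm_le_rpow_mul_lpNorm_of_le [IsFiniteMeasure μ] (hE : Bornology.IsBounded E)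
    (hμ : μ Eᶜ = 0) (hp : 0 < p) (hpq : p ≤ q) (hC : 0 ≤ C)
    (h : supNorm E P ≤ C * lpNorm μ q P) : supNorm E P ≤ C ^ (q / p) * lpNorm μ p P := by
  have hL : 0 ≤ lpNorm μ p P := lpNorm_nonneg
  rcases supNorm_nonneg.eq_or_lt with hM | hM
  · rw [← hM]
    positivity
  have hself : supNorm E P ^ (q - p) * supNorm E P ^ p ≤
      supNorm E P ^ (q - p) * (C ^ q * lpNorm μ p P ^ p) :=
    calc supNorm E P ^ (q - p) * supNorm E P ^ p = supNorm E P ^ q := by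
          rw [← Real.rpow_add hM, sub_add_cancel]
      _ ≤ (C * lpNorm μ q P) ^ q := Real.rpow_le_rpow hM.le h (hp.trans_le hpq).le
      _ = C ^ q * lpNorm μ q P ^ q := Real.mul_rpow hC lpNorm_nonneg
      _ ≤ C ^ q * (supNorm E P ^ (q - p) * lpNorm μ p P ^ p) := by
          gcongr
          exact lpNorm_rpow_le_supNorm_rpow_mul hE hμ hp hpq P
      _ = supNorm E P ^ (q - p) * (C ^ q * lpNorm μ p P ^ p) := by ring
  rw [← Real.rpow_le_rpow_iff hM.le (by positivity) hp]
  calc supNorm E P ^ p ≤ C ^ q * lpNorm μ p P ^ p := le_of_mul_le_mul_left hself (by positivity)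
    _ = (C ^ (q / p) * lpNorm μ p P) ^ p := by
        rw [Real.mul_rpow (by positivity) hL, ← Real.rpow_mul hC, div_mul_cancel₀ q hp.ne']

lemma supNorm_le_rpow_mul_lpNorm_of_pow_le [IsFiniteMeasure μ] (hE : Bornology.IsBounded E)
    (hne : E.Nonempty) (hμ : μ Eᶜ = 0) (hp : 0 < p) (hk : k ≠ 0) (hpk : p ≤ q * k) (hC : 0 ≤ C)
    (h : supNorm E (P ^ k) ≤ C * lpNorm μ q (P ^ k)) :
    supNorm E P ≤ C ^ (q / p) * lpNorm μ p P := by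
  have hroot : supNorm E P ≤ C ^ (k⁻¹ : ℝ) * lpNorm μ (q * k) P := by
    refine le_of_pow_le_pow_left₀ hk (mul_nonneg (by positivity) lpNorm_nonneg) ?_
    rwa [mul_pow, Real.rpow_inv_natCast_pow hC hk, ← lpNorm_pow hk, ← supNorm_pow hne]
  have hexp : (k⁻¹ : ℝ) * (q * k / p) = q / p := by field_simp
  rw [← hexp, Real.rpow_mul hC]
  exact supNorm_le_rpow_mul_lpNorm_of_le hE hμ hp hpk (by positivity) hroot

/-- `E`-admissibility of a norm `ν` on polynomials: on polynomials of degree at least `1`, `ν` and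
the supremum norm on `E` bound each other up to factors of polynomial growth in the degree. No norm
axiom is imposed on `ν`. -/
def IsAdmissible (E : Set (Fin N → ℂ)) (ν : MvPolynomial (Fin N) ℂ → ℝ) : Prop :=
  ∃ A B a b : ℝ, 0 < A ∧ 0 < B ∧ 0 ≤ a ∧ 0 ≤ b ∧
    ∀ P : MvPolynomial (Fin N) ℂ, 1 ≤ P.totalDegree →
      supNorm E P ≤ A * (P.totalDegree : ℝ) ^ a * ν P ∧
      ν P ≤ B * (P.totalDegree : ℝ) ^ b * supNorm E P

lemma isAdmissible_lpNorm_add_supNorm [IsFiniteMeasure μ] (hE : Bornology.IsBounded E)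
    (hμ : μ Eᶜ = 0) (hp : 0 < p) : IsAdmissible E fun P ↦ lpNorm μ p P + supNorm E P := by
  refine ⟨1, μ.real Set.univ ^ (1 / p) + 1, 0, 0, one_pos, by positivity, le_rfl, le_rfl,
    fun P _ ↦ ?_⟩
  simp only [Real.rpow_zero, mul_one, one_mul, add_mul]
  exact ⟨le_add_of_nonneg_left lpNorm_nonneg,
    add_le_add_left (lpNorm_le_measureReal_rpow_mul_supNorm hE hμ hp P) _⟩

end PolynomialNorms

theorem statement14_general {N : ℕ} {E : Set (Fin N → ℂ)} (hE : Bornology.IsBounded E)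
    (hne : E.Nonempty) {μ : Measure (Fin N → ℂ)} [IsFiniteMeasure μ] (hμ : μ Eᶜ = 0)
    {q B β : ℝ} (hB : 0 ≤ B)
    (hyp : ∀ P : MvPolynomial (Fin N) ℂ, 1 ≤ P.totalDegree →
      supNorm E P ≤ B * (P.totalDegree : ℝ) ^ β * lpNorm μ q P) :
    (∀ s : ℝ, 0 < s → ∀ k : ℕ, s ≤ q * k → ∀ P : MvPolynomial (Fin N) ℂ, 1 ≤ P.totalDegree →
      supNorm E P ≤ B ^ (q / s) * (k : ℝ) ^ (q * β / s) *
        (P.totalDegree : ℝ) ^ (q * β / s) * lpNorm μ s P) ∧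
    ∀ s : ℝ, 0 < s → IsAdmissible E fun P ↦ lpNorm μ s P + supNorm E P := by
  refine ⟨fun s hs k hsk P hP ↦ ?_, fun s hs ↦ isAdmissible_lpNorm_add_supNorm hE hμ hs⟩
  have hk : k ≠ 0 := by
    rintro rfl
    simp only [Nat.cast_zero, mul_zero] at hsk
    exact hsk.not_gt hs
  have hdeg : 1 ≤ (P ^ k).totalDegree := by
    rw [totalDegree_pow_eq]
    exact Nat.mul_pos hk.bot_lt hP
  have hexp : β * (q / s) = q * β / s := by ring
  calc supNorm E P ≤ (B * ((P ^ k).totalDegree : ℝ) ^ β) ^ (q / s) * lpNorm μ s P :=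
        supNorm_le_rpow_mul_lpNorm_of_pow_le hE hne hμ hs hk hsk (by positivity) (hyp _ hdeg)
    _ = B ^ (q / s) * (k : ℝ) ^ (q * β / s) * (P.totalDegree : ℝ) ^ (q * β / s) *
        lpNorm μ s P := by
        rw [totalDegree_pow_eq, Nat.cast_mul, Real.mul_rpow hB (by positivity),
          ← Real.rpow_mul (by positivity), hexp, Real.mul_rpow (by positivity) (by positivity),
          ← mul_assoc]

/-- Let `E ⊂ ℂ^N` be nonempty compact and `μ` a Borel probability measure
supported in `E` with `‖P‖_E ≤ B₁ (deg P)^{β₁} ‖P‖_{L²(μ)}` for all `P` with `deg P ≥ 1`.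
Then for every real `s ≥ 1` and every such `P`,
`‖P‖_E ≤ B₁^{2/s} ⌈s⌉^{2β₁/s} (deg P)^{2β₁/s} ‖P‖_{L^s(μ)}`; in particular each norm
`‖P‖_{L^s(μ)} + ‖P‖_E` (`s ≥ 1`) is `E`-admissible. -/
theorem statement14 {N : ℕ} (E : Set (Fin N → ℂ)) (hE : IsCompact E) (hne : E.Nonempty)
    (μ : Measure (Fin N → ℂ)) [IsProbabilityMeasure μ] (hsupp : μ Eᶜ = 0)
    (B₁ β₁ : ℝ) (hB₁ : 0 < B₁) (hβ₁ : 0 ≤ β₁)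
    (hyp : ∀ P : MvPolynomial (Fin N) ℂ, 1 ≤ P.totalDegree →
      supNorm E P ≤ B₁ * (P.totalDegree : ℝ) ^ β₁ * lpNorm μ 2 P) :
    (∀ s : ℝ, 1 ≤ s → ∀ P : MvPolynomial (Fin N) ℂ, 1 ≤ P.totalDegree →
      supNorm E P ≤ B₁ ^ (2 / s) * ((⌈s⌉₊ : ℝ)) ^ (2 * β₁ / s) *
        (P.totalDegree : ℝ) ^ (2 * β₁ / s) * lpNorm μ s P) ∧
    ∀ s : ℝ, 1 ≤ s → ∃ A B a b : ℝ, 0 < A ∧ 0 < B ∧ 0 ≤ a ∧ 0 ≤ b ∧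
      ∀ P : MvPolynomial (Fin N) ℂ, 1 ≤ P.totalDegree →
        supNorm E P ≤ A * (P.totalDegree : ℝ) ^ a * (lpNorm μ s P + supNorm E P) ∧
        lpNorm μ s P + supNorm E P ≤ B * (P.totalDegree : ℝ) ^ b * supNorm E P := by
  obtain ⟨hbound, hadm⟩ := statement14_general hE.isBounded hne hsupp hB₁.le hyp
  exact ⟨fun s hs ↦ hbound s (zero_lt_one.trans_le hs) ⌈s⌉₊ (by linarith [Nat.le_ceil s]),
    fun s hs ↦ hadm s (zero_lt_one.trans_le hs)⟩
end

section
/- Let E ⊂ ℂ be a nonempty compact set and r > 0. Define, for P ∈ ℂ[X], ‖P‖ = Σ_{k=0}^∞ (r^k/k!) ‖P^{(k)}‖_E and ‖P‖_σ = max_{|ζ|≤r} ‖P(· + ζ)‖_E = sup{ |P(x+ζ)| : x ∈ E, |ζ| ≤ r }. Then for every polynomial P, ‖P‖_σ ≤ ‖P‖ ≤ (deg P + 1) ‖P‖_σ; consequently lim_{n→∞} ‖P^n‖^{1/n} = ‖P‖_σ. -/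
open Polynomial Filter

/-- The `k`-th derivative `P^{(k)}` of a polynomial in one complex variable. -/
noncomputable def dIter (k : ℕ) (P : Polynomial ℂ) : Polynomial ℂ :=
  (fun Q : Polynomial ℂ => Polynomial.derivative Q)^[k] P

/-- The supremum norm `‖Q‖_E = sup_{x ∈ E} |Q(x)|`. -/
noncomputable def supC (E : Set ℂ) (P : Polynomial ℂ) : ℝ :=
  ⨆ z : E, ‖P.eval (z : ℂ)‖

/-- The norm `‖P‖ = ∑_{k=0}^∞ (r^k/k!) ‖P^{(k)}‖_E` (the sum is finite since `P^{(k)} = 0`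
for `k > deg P`). -/
noncomputable def normSum (E : Set ℂ) (r : ℝ) (P : Polynomial ℂ) : ℝ :=
  ∑' k : ℕ, r ^ k / (k.factorial : ℝ) * supC E (dIter k P)

/-- The spectral norm `‖P‖_σ = sup { |P(x+ζ)| : x ∈ E, |ζ| ≤ r }`. -/
noncomputable def normSigma (E : Set ℂ) (r : ℝ) (P : Polynomial ℂ) : ℝ :=
  ⨆ p : E × {ζ : ℂ // ‖ζ‖ ≤ r}, ‖P.eval ((p.1 : ℂ) + (p.2 : ℂ))‖

/-!
Bounding the terms of Taylor's formula `P(x + ζ) = ∑ P^{(k)}(x) ζ^k / k!` one by one gives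
`‖P‖_σ ≤ ‖P‖`. Conversely, Cauchy's estimate on the circle of radius `r` about `x ∈ E` bounds each
term of `‖P‖` by `‖P‖_σ`, and only the terms with `k ≤ deg P` are nonzero. Since `‖·‖_σ` is a
supremum norm, `‖P^n‖_σ = ‖P‖_σ^n`, and applying the two bounds to `P^n` gives
`‖P‖_σ^n ≤ ‖P^n‖ ≤ (n deg P + 1) ‖P‖_σ^n`; the factor `n deg P + 1` disappears on taking `n`-th
roots.
-/

open scoped Nat Pointwise Topology
open Metric

theorem eval_add_eq_sum_iterate_derivative {K : Type*} [Field K] [CharZero K]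
    (P : K[X]) (x y : K) :
    P.eval (x + y) =
      ∑ k ∈ Finset.range (P.natDegree + 1), y ^ k / (k ! : K) * (derivative^[k] P).eval x := by
  rw [add_comm, ← taylor_eval, eval_eq_sum_range, natDegree_taylor]
  refine Finset.sum_congr rfl fun k _ => ?_
  have hk : (k ! : K) ≠ 0 := Nat.cast_ne_zero.2 k.factorial_ne_zero
  rw [← factorial_smul_hasseDeriv, LinearMap.smul_apply, taylor_coeff, eval_smul, nsmul_eq_mul]
  field_simp

theorem iteratedDeriv_polynomial_eval {𝕜 : Type*} [NontriviallyNormedField 𝕜]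
    (P : 𝕜[X]) (k : ℕ) :
    iteratedDeriv k (fun z => P.eval z) = fun z => (derivative^[k] P).eval z := by
  induction k with
  | zero => simp
  | succ k ih =>
    funext z
    rw [iteratedDeriv_succ, ih, Polynomial.deriv, Function.iterate_succ_apply']

theorem norm_eval_iterate_derivative_le {P : ℂ[X]} {c : ℂ} {r C : ℝ} (k : ℕ) (hr : 0 < r)
    (hC : ∀ z ∈ sphere c r, ‖P.eval z‖ ≤ C) :
    ‖(derivative^[k] P).eval c‖ ≤ k ! * C / r ^ k := by
  simpa only [iteratedDeriv_polynomial_eval] using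
    Complex.norm_iteratedDeriv_le_of_forall_mem_sphere_norm_le k hr P.differentiable.diffContOnCl hC

theorem tendsto_mul_add_one_rpow_one_div {a : ℝ} (ha : 0 ≤ a) :
    Tendsto (fun n : ℕ => (n * a + 1) ^ ((1 : ℝ) / n)) atTop (𝓝 1) := by
  rcases ha.eq_or_lt with rfl | ha
  · simp
  have hlin : Tendsto (fun n : ℕ => n * a + 1) atTop atTop :=
    tendsto_atTop_add_const_right _ _ (tendsto_natCast_atTop_atTop.atTop_mul_const ha)
  refine ((tendsto_rpow_div_mul_add a 1 (-1) zero_ne_one).comp hlin).congr fun n => ?_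
  have hexp : a / (1 * (n * a + 1) + -1) = 1 / n := by
    rw [one_mul, add_neg_cancel_right, div_mul_cancel_right₀ ha.ne', one_div]
  rw [Function.comp_apply, hexp]

theorem tendsto_rpow_one_div_of_pow_le_of_le_mul_pow {u c : ℕ → ℝ} {s : ℝ} (hs : 0 ≤ s)
    (hc : Tendsto (fun n : ℕ => c n ^ ((1 : ℝ) / n)) atTop (𝓝 1)) (hc₀ : ∀ᶠ n in atTop, 0 ≤ c n)
    (hlower : ∀ᶠ n in atTop, s ^ n ≤ u n) (hupper : ∀ᶠ n in atTop, u n ≤ c n * s ^ n) :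
    Tendsto (fun n : ℕ => u n ^ ((1 : ℝ) / n)) atTop (𝓝 s) := by
  have hroot {n : ℕ} (hn : n ≠ 0) : (s ^ n) ^ ((1 : ℝ) / n) = s := by
    rw [one_div, Real.pow_rpow_inv_natCast hs hn]
  have hlim : Tendsto (fun n : ℕ => c n ^ ((1 : ℝ) / n) * s) atTop (𝓝 s) := by
    simpa only [one_mul] using hc.mul_const s
  refine tendsto_of_tendsto_of_tendsto_of_le_of_le' tendsto_const_nhds hlim ?_ ?_
  · filter_upwards [hlower, eventually_ne_atTop 0] with n hsu hn
    calc s = (s ^ n) ^ ((1 : ℝ) / n) := (hroot hn).symm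
      _ ≤ u n ^ ((1 : ℝ) / n) := by gcongr
  · filter_upwards [hlower, hupper, hc₀, eventually_ne_atTop 0] with n hsu huc hcn hn
    have hu : 0 ≤ u n := (pow_nonneg hs n).trans hsu
    calc u n ^ ((1 : ℝ) / n) ≤ (c n * s ^ n) ^ ((1 : ℝ) / n) := by gcongr
      _ = c n ^ ((1 : ℝ) / n) * s := by rw [Real.mul_rpow hcn (pow_nonneg hs n), hroot hn]

theorem supC_nonneg (S : Set ℂ) (P : ℂ[X]) : 0 ≤ supC S P :=
  Real.iSup_nonneg fun _ => norm_nonneg _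

theorem norm_eval_le_supC {S : Set ℂ} (hS : Bornology.IsBounded S) (P : ℂ[X]) {z : ℂ} (hz : z ∈ S) :
    ‖P.eval z‖ ≤ supC S P := by
  obtain ⟨C, hC⟩ := hS.isCompact_closure.exists_bound_of_continuousOn P.continuous.continuousOn
  have hbdd : BddAbove (Set.range fun z : S => ‖P.eval (z : ℂ)‖) :=
    ⟨C, Set.forall_mem_range.2 fun z => hC z (subset_closure z.2)⟩
  exact le_ciSup hbdd ⟨z, hz⟩

theorem supC_le {S : Set ℂ} {P : ℂ[X]} {C : ℝ} (hC : 0 ≤ C) (h : ∀ z ∈ S, ‖P.eval z‖ ≤ C) :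
    supC S P ≤ C :=
  Real.iSup_le (fun z => h z z.2) hC

theorem supC_pow {S : Set ℂ} (hS : S.Nonempty) (P : ℂ[X]) (n : ℕ) :
    supC S (P ^ n) = supC S P ^ n := by
  have : Nonempty S := hS.to_subtype
  simp only [supC, eval_pow, norm_pow, Real.iSup_pow fun _ => norm_nonneg _]

theorem normSigma_eq_supC_add_closedBall (E : Set ℂ) (r : ℝ) (P : ℂ[X]) :
    normSigma E r P = supC (E + closedBall 0 r) P := by
  let sum (p : E × {ζ : ℂ // ‖ζ‖ ≤ r}) : ↥(E + closedBall (0 : ℂ) r) :=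
    ⟨p.1 + p.2, Set.add_mem_add p.1.2 (mem_closedBall_zero_iff.2 p.2.2)⟩
  have hsum : Function.Surjective sum := by
    rintro ⟨_, x, hx, ζ, hζ, rfl⟩
    exact ⟨(⟨x, hx⟩, ⟨ζ, mem_closedBall_zero_iff.1 hζ⟩), rfl⟩
  exact hsum.iSup_comp fun z => ‖P.eval (z : ℂ)‖

theorem normSigma_nonneg (E : Set ℂ) (r : ℝ) (P : ℂ[X]) : 0 ≤ normSigma E r P :=
  Real.iSup_nonneg fun _ => norm_nonneg _

theorem norm_eval_le_normSigma {E : Set ℂ} (hE : Bornology.IsBounded E) {r : ℝ} (P : ℂ[X]) {x z : ℂ}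
    (hx : x ∈ E) (hz : z ∈ closedBall x r) : ‖P.eval z‖ ≤ normSigma E r P := by
  rw [normSigma_eq_supC_add_closedBall]
  refine norm_eval_le_supC (hE.add isBounded_closedBall) P ⟨x, hx, z - x, ?_, add_sub_cancel x z⟩
  rwa [mem_closedBall_zero_iff, ← mem_closedBall_iff_norm]

theorem normSigma_pow {E : Set ℂ} (hne : E.Nonempty) {r : ℝ} (hr : 0 ≤ r) (P : ℂ[X]) (n : ℕ) :
    normSigma E r (P ^ n) = normSigma E r P ^ n := by
  simp only [normSigma_eq_supC_add_closedBall, supC_pow (hne.add (nonempty_closedBall.2 hr))]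

theorem normSum_eq_sum_range (E : Set ℂ) (r : ℝ) (P : ℂ[X]) :
    normSum E r P =
      ∑ k ∈ Finset.range (P.natDegree + 1), r ^ k / (k ! : ℝ) * supC E (dIter k P) := by
  refine tsum_eq_sum fun k hk => ?_
  have hdeg : P.natDegree < k := by simpa using hk
  have hzero : dIter k P = 0 := iterate_derivative_eq_zero hdeg
  simp [hzero, supC]

theorem normSigma_le_normSum {E : Set ℂ} (hE : Bornology.IsBounded E) {r : ℝ} (hr : 0 ≤ r)
    (P : ℂ[X]) : normSigma E r P ≤ normSum E r P := by
  rw [normSum_eq_sum_range, normSigma_eq_supC_add_closedBall]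
  refine supC_le (Finset.sum_nonneg fun k _ => mul_nonneg (by positivity) (supC_nonneg _ _)) ?_
  rintro _ ⟨x, hx, ζ, hζ, rfl⟩
  have hζr : ‖ζ‖ ≤ r := mem_closedBall_zero_iff.1 hζ
  calc ‖P.eval (x + ζ)‖
      = ‖∑ k ∈ Finset.range (P.natDegree + 1), ζ ^ k / (k ! : ℂ) * (dIter k P).eval x‖ :=
        congrArg norm (eval_add_eq_sum_iterate_derivative P x ζ)
    _ ≤ ∑ k ∈ Finset.range (P.natDegree + 1), ‖ζ‖ ^ k / (k ! : ℝ) * ‖(dIter k P).eval x‖ := by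
        refine (norm_sum_le _ _).trans_eq ?_
        simp only [norm_mul, norm_div, norm_pow, Complex.norm_natCast]
    _ ≤ ∑ k ∈ Finset.range (P.natDegree + 1), r ^ k / (k ! : ℝ) * supC E (dIter k P) := by
        gcongr
        exact norm_eval_le_supC hE _ hx

theorem pow_div_factorial_mul_supC_dIter_le_normSigma {E : Set ℂ} (hE : Bornology.IsBounded E)
    {r : ℝ} (hr : 0 < r) (P : ℂ[X]) (k : ℕ) :
    r ^ k / (k ! : ℝ) * supC E (dIter k P) ≤ normSigma E r P := by
  have hσ := normSigma_nonneg E r P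
  have hCauchy : supC E (dIter k P) ≤ k ! * normSigma E r P / r ^ k :=
    supC_le (by positivity) fun x hx => norm_eval_iterate_derivative_le k hr fun _ hz =>
      norm_eval_le_normSigma hE P hx (sphere_subset_closedBall hz)
  calc r ^ k / (k ! : ℝ) * supC E (dIter k P)
      ≤ r ^ k / (k ! : ℝ) * (k ! * normSigma E r P / r ^ k) := by gcongr
    _ = normSigma E r P := by field_simp

theorem normSum_le_natDegree_add_one_mul_normSigma {E : Set ℂ} (hE : Bornology.IsBounded E) {r : ℝ}
    (hr : 0 < r) (P : ℂ[X]) :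
    normSum E r P ≤ ((P.natDegree : ℝ) + 1) * normSigma E r P := by
  rw [normSum_eq_sum_range]
  simpa using Finset.sum_le_card_nsmul (Finset.range (P.natDegree + 1)) _ _ fun k _ =>
    pow_div_factorial_mul_supC_dIter_le_normSigma hE hr P k

theorem tendsto_normSum_pow_rpow_one_div {E : Set ℂ} (hE : Bornology.IsBounded E) (hne : E.Nonempty)
    {r : ℝ} (hr : 0 < r) (P : ℂ[X]) :
    Tendsto (fun n : ℕ => normSum E r (P ^ n) ^ ((1 : ℝ) / n)) atTop (𝓝 (normSigma E r P)) := by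
  have hpow (n : ℕ) := normSigma_pow hne hr.le P n
  have hlower (n : ℕ) : normSigma E r P ^ n ≤ normSum E r (P ^ n) :=
    hpow n ▸ normSigma_le_normSum hE hr.le (P ^ n)
  have hupper (n : ℕ) :
      normSum E r (P ^ n) ≤ (n * (P.natDegree : ℝ) + 1) * normSigma E r P ^ n := by
    simpa only [hpow, natDegree_pow, Nat.cast_mul] using
      normSum_le_natDegree_add_one_mul_normSigma hE hr (P ^ n)
  exact tendsto_rpow_one_div_of_pow_le_of_le_mul_pow (normSigma_nonneg E r P)
    (tendsto_mul_add_one_rpow_one_div P.natDegree.cast_nonneg)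
    (.of_forall fun n => by positivity) (.of_forall hlower) (.of_forall hupper)

theorem statement17_general (E : Set ℂ) (hE : Bornology.IsBounded E) (hne : E.Nonempty) (r : ℝ)
    (hr : 0 < r) :
    (∀ P : ℂ[X],
      normSigma E r P ≤ normSum E r P ∧
        normSum E r P ≤ ((P.natDegree : ℝ) + 1) * normSigma E r P) ∧
    ∀ P : ℂ[X],
      Tendsto (fun n : ℕ => normSum E r (P ^ n) ^ ((1 : ℝ) / (n : ℝ))) atTop
        (𝓝 (normSigma E r P)) :=
  ⟨fun P => ⟨normSigma_le_normSum hE hr.le P, normSum_le_natDegree_add_one_mul_normSigma hE hr P⟩,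
    fun P => tendsto_normSum_pow_rpow_one_div hE hne hr P⟩

/-- Let `E ⊂ ℂ` be nonempty compact and `r > 0`. Then for every
polynomial `P`, `‖P‖_σ ≤ ‖P‖ ≤ (deg P + 1) ‖P‖_σ`; consequently
`lim_{n→∞} ‖P^n‖^{1/n} = ‖P‖_σ`. -/
theorem statement17 (E : Set ℂ) (hE : IsCompact E) (hne : E.Nonempty) (r : ℝ) (hr : 0 < r) :
    (∀ P : Polynomial ℂ,
      normSigma E r P ≤ normSum E r P ∧
        normSum E r P ≤ ((P.natDegree : ℝ) + 1) * normSigma E r P) ∧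
    ∀ P : Polynomial ℂ,
      Tendsto (fun n : ℕ => normSum E r (P ^ n) ^ ((1 : ℝ) / (n : ℝ))) atTop
        (nhds (normSigma E r P)) := by
  exact statement17_general E hE.isBounded hne r hr
end
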